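/- arXiv:0808.3773 — 2 statements merged into one kernel-verified Lean document; each statement's English description precedes it below -/
import Mathlib

section
/- Williamson's theorem: For every real symmetric positive definite matrix A of size 2N×2N there exists a real symplectic matrix S (i.e. S σ Sᵀ = σ, where σ is the standard symplectic form σ = [[0, 1_N], [−1_N, 0]]) such that S A Sᵀ = D ⊕ D, where D = diag(d₁, …, d_N) with d₁, …, d_N > 0. Moreover, the multiset {d₁², …, d_N², d₁², …, d_N²} equals the multiset of eigenvalues of the matrix −(σA)². -/
open scoped BigOperators
open Polynomial Matrix

/-- The standard symplectic form `σ = [[0, 1_N], [−1_N, 0]]` on a `2N`-dimensional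
real space (indexed by `Fin N ⊕ Fin N`). -/
def symplecticForm (N : ℕ) : Matrix (Fin N ⊕ Fin N) (Fin N ⊕ Fin N) ℝ :=
  Matrix.fromBlocks 0 1 (-1) 0

/-!
Write `σ = -J`. If `Pᵀ A P = 1`, then a matrix `S = R Pᵀ` is symplectic and diagonalizes `A` as soon
as `R` takes the skew-symmetric matrix `K = Pᵀ J P` to `R K Rᵀ = J` and has orthogonal rows. To find
such rows, take an eigenvector of the symmetric operator `K²` in the orthogonal complement of a
`K`-invariant subspace: with its image under `K` it spans a plane on which `K` is a multiple of a
quarter turn. Splitting off such planes one at a time gives an orthonormal basis in which `K` has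
`2 × 2` blocks with entries `±c`, and scaling its vectors by `1 / √c` normalizes these entries to
`±1`, so that `d = 1 / c`. The claim on eigenvalues holds because `J A` is similar to `J (S A Sᵀ)`.
-/

open scoped RealInnerProductSpace

open Module.End (invtSubmodule)

section SkewAdjoint

variable {E : Type*} [NormedAddCommGroup E] [InnerProductSpace ℝ E] {K : E →ₗ[ℝ] E}

theorem inner_map_left_of_isSkewAdjoint (hK : (innerₗ E).IsSkewAdjoint K) (x y : E) :
    ⟪K x, y⟫ = -⟪x, K y⟫ := by
  simpa using hK x y

theorem inner_self_map_of_isSkewAdjoint (hK : (innerₗ E).IsSkewAdjoint K) (x : E) :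
    ⟪x, K x⟫ = 0 := by
  have h := inner_map_left_of_isSkewAdjoint hK x x
  rw [real_inner_comm] at h
  linarith

theorem isSymmetric_comp_self_of_isSkewAdjoint (hK : (innerₗ E).IsSkewAdjoint K) :
    (K ∘ₗ K).IsSymmetric := fun x y ↦ by
  simp [inner_map_left_of_isSkewAdjoint hK]

theorem orthogonal_mem_invtSubmodule_of_isSkewAdjoint (hK : (innerₗ E).IsSkewAdjoint K)
    {W : Submodule ℝ E} (hW : W ∈ invtSubmodule K) : Wᗮ ∈ invtSubmodule K := fun x hx u hu ↦ by
  have h := inner_map_left_of_isSkewAdjoint hK u x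
  rw [hx _ (hW hu)] at h
  linarith

theorem exists_norm_eq_one_map_eq_smul_of_isSymmetric {𝕜 F : Type*} [RCLike 𝕜]
    [NormedAddCommGroup F] [InnerProductSpace 𝕜 F] {T : F →ₗ[𝕜] F} (hT : T.IsSymmetric)
    {V : Submodule 𝕜 F} [FiniteDimensional 𝕜 V] (hV : V ∈ invtSubmodule T) (hne : V ≠ ⊥) :
    ∃ v ∈ V, ‖v‖ = 1 ∧ ∃ μ : 𝕜, T v = μ • v := by
  have : Nontrivial V := V.nontrivial_iff_ne_bot.mpr hne
  obtain ⟨μ, x, hx⟩ : ∃ μ x, Module.End.HasEigenvector (T.restrict hV) μ x :=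
    ⟨_, (hT.restrict_invariant hV).hasEigenvalue_iSup_of_finiteDimensional.exists_hasEigenvector⟩
  have hx0 : (x : F) ≠ 0 := by simpa using hx.2
  refine ⟨(‖(x : F)‖⁻¹ : 𝕜) • (x : F), V.smul_mem _ x.2, norm_smul_inv_norm hx0, μ, ?_⟩
  rw [map_smul, smul_comm]
  exact congrArg (_ • ·) (congrArg Subtype.val hx.apply_eq_smul)

theorem exists_norm_eq_one_map_map_eq_smul [FiniteDimensional ℝ E]
    (hK : (innerₗ E).IsSkewAdjoint K) (hinj : Function.Injective K)
    {V : Submodule ℝ E} (hV : V ∈ invtSubmodule K) (hne : V ≠ ⊥) :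
    ∃ v ∈ V, ‖v‖ = 1 ∧ ∃ c : ℝ, 0 < c ∧ K (K v) = -c ^ 2 • v := by
  obtain ⟨v, hvV, hv, μ, hμ : K (K v) = μ • v⟩ :=
    exists_norm_eq_one_map_eq_smul_of_isSymmetric (isSymmetric_comp_self_of_isSkewAdjoint hK)
      (fun _ hx ↦ hV (hV hx)) hne
  have hv0 : v ≠ 0 := norm_ne_zero_iff.mp (by simp [hv])
  have hKv : ‖K v‖ ^ 2 = -μ := by
    rw [← real_inner_self_eq_norm_sq, inner_map_left_of_isSkewAdjoint hK, hμ, inner_smul_right,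
      real_inner_self_eq_norm_sq, hv, one_pow, mul_one]
  refine ⟨v, hvV, hv, ‖K v‖, norm_pos_iff.mpr ((map_ne_zero_iff K hinj).mpr hv0), ?_⟩
  rw [hμ, hKv, neg_neg]

end SkewAdjoint

theorem exists_pos_sq_eq {x : ℝ} (hx : 0 < x) : ∃ y > 0, y ^ 2 = x :=
  ⟨√x, Real.sqrt_pos.mpr hx, Real.sq_sqrt hx.le⟩

/-- An orthonormal family of eigenvectors `a i` of `K²`, with eigenvalues `-(c i)²`, that spans an
isotropic subspace of the form `⟪x, K y⟫`. For skew-adjoint `K` the `a i` and `K (a i)` are then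
pairwise orthogonal, so that the family stands for orthogonal `K`-invariant planes. -/
structure IsIsotropicEigenfamily {E ι : Type*} [NormedAddCommGroup E] [InnerProductSpace ℝ E]
    (K : E →ₗ[ℝ] E) (c : ι → ℝ) (a : ι → E) : Prop where
  orthonormal : Orthonormal ℝ a
  isotropic : ∀ i j, ⟪a i, K (a j)⟫ = 0
  pos : ∀ i, 0 < c i
  map_map : ∀ i, K (K (a i)) = -c i ^ 2 • a i

/-- For an isotropic eigenfamily, the orthogonal symplectic basis of the planes it stands for: the
`a i`, followed by the unit vectors `(c i)⁻¹ • K (a i)`, all scaled by `(√(c i))⁻¹` so that the form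
`⟪x, K y⟫` has matrix `J` on them. -/
noncomputable def symplecticFrame {E ι : Type*} [NormedAddCommGroup E] [InnerProductSpace ℝ E]
    (K : E →ₗ[ℝ] E) (c : ι → ℝ) (a : ι → E) : ι ⊕ ι → E :=
  Sum.elim (fun i ↦ (√(c i))⁻¹ • a i) (fun i ↦ (√(c i))⁻¹ • (c i)⁻¹ • K (a i))

namespace IsIsotropicEigenfamily

variable {E ι : Type*} [NormedAddCommGroup E] [InnerProductSpace ℝ E] {K : E →ₗ[ℝ] E}
  {c : ι → ℝ} {a : ι → E}

theorem comp {κ : Type*} (h : IsIsotropicEigenfamily K c a) {f : κ → ι}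
    (hf : Function.Injective f) : IsIsotropicEigenfamily K (c ∘ f) (a ∘ f) where
  orthonormal := h.orthonormal.comp f hf
  isotropic i j := h.isotropic (f i) (f j)
  pos i := h.pos (f i)
  map_map i := h.map_map (f i)

theorem span_mem_invtSubmodule (h : IsIsotropicEigenfamily K c a) :
    Submodule.span ℝ (Set.range (Sum.elim a (K ∘ a))) ∈ invtSubmodule K := by
  refine Submodule.span_le.mpr ?_
  rintro _ ⟨i | i, rfl⟩
  · exact Submodule.subset_span ⟨Sum.inr i, rfl⟩
  · change K (K (a i)) ∈ Submodule.span ℝ (Set.range (Sum.elim a (K ∘ a)))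
    rw [h.map_map]
    exact Submodule.smul_mem _ _ (Submodule.subset_span ⟨Sum.inl i, rfl⟩)

theorem vecCons {k : ℕ} {c : Fin k → ℝ} {a : Fin k → E} (h : IsIsotropicEigenfamily K c a)
    (hK : (innerₗ E).IsSkewAdjoint K) {v : E} {r : ℝ}
    (hv : v ∈ (Submodule.span ℝ (Set.range (Sum.elim a (K ∘ a))))ᗮ) (hv1 : ‖v‖ = 1)
    (hr : 0 < r) (hKv : K (K v) = -r ^ 2 • v) :
    IsIsotropicEigenfamily K (vecCons r c) (vecCons v a) := by
  have inner_a (i : Fin k) : ⟪v, a i⟫ = 0 :=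
    (Submodule.mem_orthogonal' _ v).mp hv _ (Submodule.subset_span ⟨Sum.inl i, rfl⟩)
  have inner_Ka (i : Fin k) : ⟪v, K (a i)⟫ = 0 :=
    (Submodule.mem_orthogonal' _ v).mp hv _ (Submodule.subset_span ⟨Sum.inr i, rfl⟩)
  have inner_Kv (i : Fin k) : ⟪a i, K v⟫ = 0 := by
    rw [← neg_eq_zero, ← inner_map_left_of_isSkewAdjoint hK, real_inner_comm, inner_Ka]
  refine ⟨orthonormal_vecCons_iff.mpr ⟨hv1, inner_a, h.orthonormal⟩, ?_, ?_, ?_⟩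
  · simp [Fin.forall_fin_succ, inner_self_map_of_isSkewAdjoint hK, inner_Ka, inner_Kv, h.isotropic]
  · simp [Fin.forall_fin_succ, hr, h.pos]
  · simp [Fin.forall_fin_succ, hKv, h.map_map]

theorem exists_fin [FiniteDimensional ℝ E] (hK : (innerₗ E).IsSkewAdjoint K)
    (hinj : Function.Injective K) (k : ℕ) (hk : 2 * k ≤ Module.finrank ℝ E) :
    ∃ (c : Fin k → ℝ) (a : Fin k → E), IsIsotropicEigenfamily K c a := by
  induction k with
  | zero => exact ⟨![], ![], by simp, by simp, by simp, by simp⟩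
  | succ k ih =>
    obtain ⟨c, a, h⟩ := ih (by lia)
    set W := Submodule.span ℝ (Set.range (Sum.elim a (K ∘ a)))
    have finrank_lt : Module.finrank ℝ W < Module.finrank ℝ E := calc
      _ ≤ Fintype.card (Fin k ⊕ Fin k) := finrank_range_le_card _
      _ < _ := by simp only [Fintype.card_sum, Fintype.card_fin]; lia
    have orthogonal_ne_bot : Wᗮ ≠ ⊥ := fun hbot ↦
      finrank_lt.ne (by rw [W.orthogonal_eq_bot_iff.mp hbot, finrank_top])
    obtain ⟨v, hv, hv1, r, hr, hKv⟩ := exists_norm_eq_one_map_map_eq_smul hK hinj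
      (orthogonal_mem_invtSubmodule_of_isSkewAdjoint hK h.span_mem_invtSubmodule)
      orthogonal_ne_bot
    exact ⟨_, _, h.vecCons hK hv hv1 hr hKv⟩

theorem inner_map_left (h : IsIsotropicEigenfamily K c a) (i j : ι) : ⟪K (a i), a j⟫ = 0 := by
  rw [real_inner_comm, h.isotropic]

theorem inner_map_map_eq [DecidableEq ι] (h : IsIsotropicEigenfamily K c a)
    (hK : (innerₗ E).IsSkewAdjoint K) (i j : ι) :
    ⟪K (a i), K (a j)⟫ = if i = j then c i ^ 2 else 0 := by
  rw [inner_map_left_of_isSkewAdjoint hK, h.map_map, inner_smul_right,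
    orthonormal_iff_ite.mp h.orthonormal]
  split_ifs with hij <;> simp [hij]

theorem gram_symplecticFrame [DecidableEq ι] (h : IsIsotropicEigenfamily K c a)
    (hK : (innerₗ E).IsSkewAdjoint K) :
    gram ℝ (symplecticFrame K c a) = diagonal (Sum.elim c⁻¹ c⁻¹) := by
  ext (i | i) (j | j) <;>
    simp only [symplecticFrame, gram_apply, Sum.elim_inl, Sum.elim_inr, real_inner_smul_left,
      real_inner_smul_right, diagonal_apply, orthonormal_iff_ite.mp h.orthonormal, h.isotropic,
      h.inner_map_left, h.inner_map_map_eq hK, Sum.inl.injEq, Sum.inr.injEq, reduceCtorEq,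
      if_false, mul_zero]
  all_goals
    obtain rfl | hij := eq_or_ne i j
    · obtain ⟨t, ht, hc⟩ := exists_pos_sq_eq (h.pos i)
      simp only [← hc, Real.sqrt_sq ht.le, if_true, Pi.inv_apply]
      field_simp
    · simp only [if_neg hij, mul_zero]

theorem inner_map_symplecticFrame [DecidableEq ι] (h : IsIsotropicEigenfamily K c a)
    (hK : (innerₗ E).IsSkewAdjoint K) (p q : ι ⊕ ι) :
    ⟪symplecticFrame K c a p, K (symplecticFrame K c a q)⟫ = J ι ℝ p q := by
  rcases p with i | i <;> rcases q with j | j <;>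
    simp only [symplecticFrame, J, Sum.elim_inl, Sum.elim_inr, map_smul, real_inner_smul_left,
      real_inner_smul_right, orthonormal_iff_ite.mp h.orthonormal, h.isotropic, h.inner_map_left,
      h.map_map, h.inner_map_map_eq hK, mul_zero, fromBlocks_apply₁₁, fromBlocks_apply₁₂,
      fromBlocks_apply₂₁, fromBlocks_apply₂₂, Matrix.zero_apply, Matrix.neg_apply, one_apply]
  all_goals
    obtain rfl | hij := eq_or_ne i j
    · obtain ⟨t, ht, hc⟩ := exists_pos_sq_eq (h.pos i)
      simp only [← hc, Real.sqrt_sq ht.le, if_true]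
      field_simp
    · simp only [if_neg hij, mul_zero, neg_zero]

end IsIsotropicEigenfamily

theorem exists_gram_eq_diagonal_and_inner_map_eq_J {E l : Type*} [NormedAddCommGroup E]
    [InnerProductSpace ℝ E] [FiniteDimensional ℝ E] [Fintype l] [DecidableEq l]
    {K : E →ₗ[ℝ] E} (hK : (innerₗ E).IsSkewAdjoint K) (hinj : Function.Injective K)
    (hl : 2 * Fintype.card l ≤ Module.finrank ℝ E) :
    ∃ (r : l ⊕ l → E) (d : l → ℝ), (∀ i, 0 < d i) ∧
      gram ℝ r = diagonal (Sum.elim d d) ∧ ∀ p q, ⟪r p, K (r q)⟫ = J l ℝ p q := by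
  obtain ⟨c, a, hca⟩ := IsIsotropicEigenfamily.exists_fin hK hinj (Fintype.card l) hl
  have h := hca.comp (Fintype.equivFin l).injective
  exact ⟨symplecticFrame K _ _, _, fun i ↦ inv_pos.mpr (h.pos i), h.gram_symplecticFrame hK,
    h.inner_map_symplecticFrame hK⟩

section SymplecticGroup

variable {l R : Type*} [Fintype l] [DecidableEq l] [CommRing R]

theorem charpoly_neg_J_mul_sq_of_mem_symplecticGroup {S : Matrix (l ⊕ l) (l ⊕ l) R}
    (hS : S ∈ symplecticGroup l R) (A : Matrix (l ⊕ l) (l ⊕ l) R) :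
    (-(J l R * A) ^ 2).charpoly = (-(J l R * (S * A * Sᵀ)) ^ 2).charpoly := by
  obtain ⟨u, hu⟩ : IsUnit Sᵀ :=
    (isUnit_iff_isUnit_det _).mpr
      (SymplecticGroup.symplectic_det (SymplecticGroup.transpose_mem hS))
  have semiconj : SemiconjBy (u : Matrix (l ⊕ l) (l ⊕ l) R) (J l R * (S * A * Sᵀ)) (J l R * A) := by
    rw [hu, SemiconjBy]
    calc Sᵀ * (J l R * (S * A * Sᵀ)) = Sᵀ * J l R * S * A * Sᵀ := by simp only [Matrix.mul_assoc]
      _ = J l R * A * Sᵀ := by rw [SymplecticGroup.mem_iff'.mp hS]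
  rw [← charpoly_units_conj u (-(J l R * (S * A * Sᵀ)) ^ 2), (semiconj.pow_right 2).neg_right.eq,
    ← coe_units_inv, Units.mul_inv_cancel_right]

theorem neg_J_mul_diagonal_sq (d : l → R) :
    -(J l R * diagonal (Sum.elim d d)) ^ 2 =
      diagonal (Sum.elim (fun i ↦ d i ^ 2) (fun i ↦ d i ^ 2)) := by
  rw [← fromBlocks_diagonal, ← fromBlocks_diagonal, J, sq]
  simp [fromBlocks_multiply, fromBlocks_neg, sq, -fromBlocks_diagonal]

end SymplecticGroup

section RealMatrix

variable {l n : Type*} [Fintype l] [DecidableEq l] [Fintype n] [DecidableEq n]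

theorem mul_mul_transpose_apply_eq_inner {m : Type*} (r : m → EuclideanSpace ℝ n)
    (M : Matrix n n ℝ) (p q : m) :
    (of (fun p ↦ (r p).ofLp) * M * (of fun p ↦ (r p).ofLp)ᵀ) p q =
      ⟪r p, M.toEuclideanLin (r q)⟫ := by
  rw [EuclideanSpace.inner_eq_star_dotProduct, dotProduct_comm, Matrix.mul_assoc]
  rfl

theorem isSkewAdjoint_toEuclideanLin {K : Matrix n n ℝ} (hK : Kᵀ = -K) :
    (innerₗ (EuclideanSpace ℝ n)).IsSkewAdjoint K.toEuclideanLin := fun x y ↦ by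
  rw [innerₗ_apply_apply, ← LinearMap.adjoint_inner_right,
    ← toEuclideanLin_conjTranspose_eq_adjoint, conjTranspose_eq_transpose_of_trivial, hK, map_neg]
  rfl

theorem injective_toEuclideanLin_of_isUnit {K : Matrix n n ℝ} (hK : IsUnit K) :
    Function.Injective K.toEuclideanLin := fun _ _ hxy ↦
  WithLp.ofLp_injective 2 (mulVec_injective_of_isUnit hK (congrArg WithLp.ofLp hxy))

theorem exists_mul_transpose_eq_diagonal_and_mul_mul_transpose_eq_J {K : Matrix n n ℝ}
    (hK : Kᵀ = -K) (hu : IsUnit K) (hl : 2 * Fintype.card l ≤ Fintype.card n) :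
    ∃ (R : Matrix (l ⊕ l) n ℝ) (d : l → ℝ), (∀ i, 0 < d i) ∧
      R * Rᵀ = diagonal (Sum.elim d d) ∧ R * K * Rᵀ = J l ℝ := by
  obtain ⟨r, d, hd, hgram, hJ⟩ := exists_gram_eq_diagonal_and_inner_map_eq_J
    (isSkewAdjoint_toEuclideanLin hK) (injective_toEuclideanLin_of_isUnit hu)
    (hl.trans_eq finrank_euclideanSpace.symm)
  refine ⟨of fun p ↦ (r p).ofLp, d, hd, ?_, ?_⟩
  · ext p q
    have h := mul_mul_transpose_apply_eq_inner r 1 p q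
    rw [Matrix.mul_one] at h
    rw [← hgram, gram_apply, h]
    simp
  · ext p q
    rw [mul_mul_transpose_apply_eq_inner, hJ]

open scoped MatrixOrder in
theorem exists_isUnit_transpose_mul_mul_eq_one {A : Matrix n n ℝ} (hA : A.PosDef) :
    ∃ P : Matrix n n ℝ, IsUnit P ∧ Pᵀ * A * P = 1 := by
  obtain ⟨_, ⟨B, rfl⟩, rfl⟩ :=
    CStarAlgebra.isStrictlyPositive_iff_eq_star_mul_self.mp hA.isStrictlyPositive
  refine ⟨↑B⁻¹, B⁻¹.isUnit, ?_⟩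
  rw [star_eq_conjTranspose, conjTranspose_eq_transpose_of_trivial, ← Matrix.mul_assoc,
    ← transpose_mul, B.mul_inv, transpose_one, Matrix.one_mul, B.mul_inv]

theorem exists_mem_symplecticGroup_mul_mul_transpose_eq_diagonal
    {A : Matrix (l ⊕ l) (l ⊕ l) ℝ} (hA : A.PosDef) :
    ∃ S ∈ symplecticGroup l ℝ, ∃ d : l → ℝ, (∀ i, 0 < d i) ∧
      S * A * Sᵀ = diagonal (Sum.elim d d) := by
  obtain ⟨P, hP, hPA⟩ := exists_isUnit_transpose_mul_mul_eq_one hA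
  have isUnit_J : IsUnit (J l ℝ) := (isUnit_iff_isUnit_det _).mpr (isUnit_det_J l ℝ)
  obtain ⟨R, d, hd, hR, hRJ⟩ := exists_mul_transpose_eq_diagonal_and_mul_mul_transpose_eq_J
    (l := l) (K := Pᵀ * J l ℝ * P) (by simp [Matrix.mul_assoc])
    (((isUnit_transpose P).mpr hP |>.mul isUnit_J).mul hP) (by simp [two_mul])
  have mul_congr (M : Matrix (l ⊕ l) (l ⊕ l) ℝ) :
      R * Pᵀ * M * (R * Pᵀ)ᵀ = R * (Pᵀ * M * P) * Rᵀ := by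
    simp only [transpose_mul, transpose_transpose, Matrix.mul_assoc]
  refine ⟨R * Pᵀ, SymplecticGroup.mem_iff.mpr ?_, d, hd, ?_⟩
  · rw [mul_congr, hRJ]
  · rw [mul_congr, hPA, Matrix.mul_one, hR]

end RealMatrix

theorem williamson_general {l : Type*} [Fintype l] [DecidableEq l]
    {A : Matrix (l ⊕ l) (l ⊕ l) ℝ} (hA : A.PosDef) :
    ∃ S ∈ symplecticGroup l ℝ, ∃ d : l → ℝ, (∀ i, 0 < d i) ∧
      S * A * Sᵀ = diagonal (Sum.elim d d) ∧
      (-(J l ℝ * A) ^ 2).charpoly = ∏ i, (X - C (d i ^ 2)) ^ 2 := by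
  obtain ⟨S, hS, d, hd, hSA⟩ := exists_mem_symplecticGroup_mul_mul_transpose_eq_diagonal hA
  refine ⟨S, hS, d, hd, hSA, ?_⟩
  rw [charpoly_neg_J_mul_sq_of_mem_symplecticGroup hS, hSA, neg_J_mul_diagonal_sq,
    charpoly_diagonal]
  simp [sq, Finset.prod_mul_distrib]

theorem symplecticForm_eq_neg_J (N : ℕ) : symplecticForm N = -J (Fin N) ℝ := by
  simp [symplecticForm, J, fromBlocks_neg]

/-- **Williamson's theorem.** For every real symmetric positive definite `2N×2N` matrix `A`
there is a real symplectic matrix `S` (i.e. `S σ Sᵀ = σ`) such that `S A Sᵀ = D ⊕ D` with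
`D = diag(d₁, …, d_N)`, `dᵢ > 0`. Moreover the multiset `{d₁², …, d_N²}`, each element taken
twice, is the multiset of eigenvalues of `−(σA)²`, expressed here through the characteristic
polynomial: `charpoly(−(σA)²) = ∏ᵢ (X − dᵢ²)²`. -/
theorem williamson (N : ℕ) (A : Matrix (Fin N ⊕ Fin N) (Fin N ⊕ Fin N) ℝ)
    (hA : A.PosDef) :
    ∃ (S : Matrix (Fin N ⊕ Fin N) (Fin N ⊕ Fin N) ℝ) (d : Fin N → ℝ),
      (∀ i, 0 < d i) ∧
      S * symplecticForm N * Sᵀ = symplecticForm N ∧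
      S * A * Sᵀ = Matrix.fromBlocks (Matrix.diagonal d) 0 0 (Matrix.diagonal d) ∧
      (-((symplecticForm N * A) ^ 2)).charpoly =
        ∏ i : Fin N, (X - C (d i ^ 2)) ^ 2 := by
  obtain ⟨S, hS, d, h⟩ := williamson_general hA
  exact ⟨S, d, by simpa [symplecticForm_eq_neg_J, SymplecticGroup.mem_iff.mp hS] using h⟩
end

section
/- Area law for matrix-product states: Let d, D, N ≥ 1, and for each site k ∈ {1, …, N} and each j ∈ {1, …, d} let A^{(k)}[j] be a complex D×D matrix. Define ψ : (Fin N → Fin d) → ℂ by ψ(i₁, …, i_N) = tr[A^{(1)}[i₁] A^{(2)}[i₂] ⋯ A^{(N)}[i_N]], and assume ψ ≠ 0; let ρ = ψψ†/‖ψ‖² be the associated pure density matrix on (ℂ^d)^{⊗N}. Then for every contiguous block I = {1, …, n} with 1 ≤ n ≤ N, the reduced density matrix ρ_I (the partial trace of ρ over the sites not in I) has rank at most D², and consequently its von Neumann entropy satisfies S(ρ_I) ≤ 2 log₂ D. -/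
open scoped BigOperators
open Matrix

/-- The von Neumann entropy (in bits) of a matrix (junk value `0` if not Hermitian). -/
noncomputable def vNEntropy {n : Type*} [Fintype n] [DecidableEq n]
    (ρ : Matrix n n ℂ) : ℝ :=
  if h : ρ.IsHermitian then -∑ i, h.eigenvalues i * Real.logb 2 (h.eigenvalues i) else 0

/-- The reduced density matrix (partial trace over the sites outside `I`). -/
noncomputable def reduced {V : Type*} [Fintype V] [DecidableEq V] {d : ℕ} (I : Finset V)
    (ρ : Matrix (V → Fin d) (V → Fin d) ℂ) :
    Matrix ({i // i ∈ I} → Fin d) ({i // i ∈ I} → Fin d) ℂ :=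
  fun x y => ∑ z : {i // i ∉ I} → Fin d,
    ρ (fun i => if h : i ∈ I then x ⟨i, h⟩ else z ⟨i, h⟩)
      (fun i => if h : i ∈ I then y ⟨i, h⟩ else z ⟨i, h⟩)

/-!
Cutting the chain after site `n` splits the trace of the matrix product as `tr (L x * T z)`, with
`L x` and `T z` the products over the two sides. Periodic boundary conditions leave two bonds
across the cut, so the amplitudes, read as a matrix in `(x, z)`, factor through pairs of bond
indices and have rank at most `D ^ 2`. The reduced state of `ψ` is this matrix times its adjoint,
up to normalization. Finally, a density matrix of rank `r` has entropy at most `log₂ r`, by Jensen's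
inequality for `log` on its nonzero eigenvalues.
-/

section Entropy

open scoped ComplexOrder

lemma sum_negMulLog_le_log_of_card_support_le {ι : Type*} {s : Finset ι} {p : ι → ℝ} {K : ℕ}
    (hp : ∀ i ∈ s, 0 ≤ p i) (hsum : ∑ i ∈ s, p i = 1) (hK : (s.filter (p · ≠ 0)).card ≤ K) :
    ∑ i ∈ s, Real.negMulLog (p i) ≤ Real.log K := by
  set t := s.filter (p · ≠ 0) with ht
  have hpos : ∀ i ∈ t, 0 < p i := fun i hi =>
    (hp i (Finset.mem_filter.1 hi).1).lt_of_ne' (Finset.mem_filter.1 hi).2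
  have hsum_t : ∑ i ∈ t, p i = 1 := by rw [ht, Finset.sum_filter_ne_zero, hsum]
  have ht_card : 0 < t.card := Finset.card_pos.2 <|
    Finset.nonempty_of_sum_ne_zero (hsum_t.trans_ne one_ne_zero)
  calc ∑ i ∈ s, Real.negMulLog (p i)
      = ∑ i ∈ t, Real.negMulLog (p i) := by
        rw [ht, Finset.sum_filter_of_ne]
        exact fun i _ => mt fun hzero => by rw [hzero, Real.negMulLog_zero]
    _ = ∑ i ∈ t, p i • Real.log (p i)⁻¹ := by simp [Real.negMulLog, Real.log_inv]
    _ ≤ Real.log (∑ i ∈ t, p i • (p i)⁻¹) :=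
        strictConcaveOn_log_Ioi.concaveOn.le_map_sum (fun i hi => (hpos i hi).le) hsum_t
          fun i hi => inv_pos.2 (hpos i hi)
    _ = Real.log t.card := by
        congr 1
        rw [Finset.card_eq_sum_ones, Nat.cast_sum]
        exact Finset.sum_congr rfl fun i hi => by simp [(hpos i hi).ne']
    _ ≤ Real.log K := Real.log_le_log (mod_cast ht_card) (mod_cast hK)

variable {ι : Type*} [Fintype ι] [DecidableEq ι] {ρ : Matrix ι ι ℂ}

lemma vNEntropy_eq_sum_negMulLog_div (hρ : ρ.IsHermitian) :
    vNEntropy ρ = (∑ i, Real.negMulLog (hρ.eigenvalues i)) / Real.log 2 := by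
  simp only [vNEntropy, dif_pos hρ, Real.negMulLog, Real.logb, neg_mul, Finset.sum_neg_distrib,
    neg_div, Finset.sum_div, mul_div_assoc]

lemma vNEntropy_le_logb_of_rank_le {K : ℕ} (hρ : ρ.PosSemidef) (htrace : ρ.trace = 1)
    (hrank : ρ.rank ≤ K) : vNEntropy ρ ≤ Real.logb 2 K := by
  have hsum : ∑ i, hρ.isHermitian.eigenvalues i = 1 := by
    have h := hρ.isHermitian.trace_eq_sum_eigenvalues
    rw [htrace] at h
    exact Complex.ofReal_injective (by push_cast; exact h.symm)
  have hcard : (Finset.univ.filter (hρ.isHermitian.eigenvalues · ≠ 0)).card ≤ K := by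
    rwa [← Fintype.card_subtype, ← hρ.isHermitian.rank_eq_card_non_zero_eigs]
  rw [vNEntropy_eq_sum_negMulLog_div hρ.isHermitian, Real.logb]
  gcongr
  exact sum_negMulLog_le_log_of_card_support_le (fun i _ => hρ.eigenvalues_nonneg i) hsum hcard

end Entropy

section PureState

open scoped ComplexOrder

variable {ι : Type*} [Fintype ι]

/-- The density matrix `ψψ† / ‖ψ‖²` of the pure state with the (unnormalized) amplitudes `ψ`; it is
`0` when `ψ = 0`. -/
noncomputable def pureState (ψ : ι → ℂ) : Matrix ι ι ℂ :=
  ((∑ z, ‖ψ z‖ ^ 2 : ℝ) : ℂ)⁻¹ • vecMulVec ψ (star ψ)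

lemma posSemidef_pureState (ψ : ι → ℂ) : (pureState ψ).PosSemidef := by
  have hnorm : (0 : ℂ) ≤ ((∑ z, ‖ψ z‖ ^ 2 : ℝ) : ℂ) := mod_cast by positivity
  exact (posSemidef_vecMulVec_self_star ψ).smul (inv_nonneg.2 hnorm)

lemma trace_pureState {ψ : ι → ℂ} (hψ : ψ ≠ 0) : (pureState ψ).trace = 1 := by
  have hnorm : ψ ⬝ᵥ star ψ = ((∑ z, ‖ψ z‖ ^ 2 : ℝ) : ℂ) := by
    push_cast
    exact Finset.sum_congr rfl fun z _ => Complex.mul_conj' (ψ z)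
  rw [pureState, trace_smul, trace_vecMulVec, ← hnorm, smul_eq_mul, inv_mul_cancel₀]
  exact mt dotProduct_self_star_eq_zero.1 hψ

end PureState

section Reduced

open scoped ComplexOrder

variable {V α : Type*} [DecidableEq V]

/-- Assembles a configuration of all sites from one on `I` and one on the complement of `I`. -/
def glue (I : Finset V) : ({i // i ∈ I} → α) × ({i // i ∉ I} → α) ≃ (V → α) :=
  (Equiv.piEquivPiSubtypeProd (· ∈ I) fun _ => α).symm

lemma glue_of_mem {I : Finset V} {i : V} (hi : i ∈ I)
    (p : ({i // i ∈ I} → α) × ({i // i ∉ I} → α)) : glue I p i = p.1 ⟨i, hi⟩ :=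
  dif_pos hi

lemma glue_of_notMem {I : Finset V} {i : V} (hi : i ∉ I)
    (p : ({i // i ∈ I} → α) × ({i // i ∉ I} → α)) : glue I p i = p.2 ⟨i, hi⟩ :=
  dif_neg hi

/-- The amplitudes `ψ` as a matrix across the cut `I | Iᶜ`, whose rank is the Schmidt rank of
`ψ`. -/
def unfolding {R : Type*} (I : Finset V) (ψ : (V → α) → R) :
    Matrix ({i // i ∈ I} → α) ({i // i ∉ I} → α) R :=
  fun x z => ψ (glue I (x, z))

variable [Fintype V] {d : ℕ} (I : Finset V)

lemma reduced_eq_sum_submatrix (ρ : Matrix (V → Fin d) (V → Fin d) ℂ) :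
    reduced I ρ = ∑ z, ρ.submatrix (fun x => glue I (x, z)) (fun y => glue I (y, z)) := by
  ext x y
  rw [Matrix.sum_apply]
  rfl

lemma posSemidef_reduced {ρ : Matrix (V → Fin d) (V → Fin d) ℂ} (hρ : ρ.PosSemidef) :
    (reduced I ρ).PosSemidef := by
  rw [reduced_eq_sum_submatrix]
  exact posSemidef_sum _ fun z _ => hρ.submatrix _

lemma trace_reduced (ρ : Matrix (V → Fin d) (V → Fin d) ℂ) :
    (reduced I ρ).trace = ρ.trace :=
  calc (reduced I ρ).trace
      = ∑ x, ∑ z, ρ (glue I (x, z)) (glue I (x, z)) := rfl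
    _ = ∑ p, ρ (glue I p) (glue I p) := by rw [Fintype.sum_prod_type]
    _ = ∑ w, ρ w w := Equiv.sum_comp (glue I) fun w => ρ w w

lemma reduced_vecMulVec (ψ φ : (V → Fin d) → ℂ) :
    reduced I (vecMulVec ψ φ) = unfolding I ψ * (unfolding I φ)ᵀ :=
  rfl

lemma reduced_smul (c : ℂ) (ρ : Matrix (V → Fin d) (V → Fin d) ℂ) :
    reduced I (c • ρ) = c • reduced I ρ := by
  simp only [reduced_eq_sum_submatrix, Finset.smul_sum, submatrix_smul, Pi.smul_apply]

lemma rank_reduced_pureState_le (ψ : (V → Fin d) → ℂ) :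
    (reduced I (pureState ψ)).rank ≤ (unfolding I ψ).rank := by
  rw [pureState, reduced_smul, reduced_vecMulVec, ← Matrix.mul_smul]
  exact rank_mul_le_left _ _

end Reduced

section MatrixProduct

variable {R α κ : Type*} [CommSemiring R]

lemma rank_le_of_eq_trace_mul [StrongRankCondition R] {m n l : Type*}
    [Fintype n] [Fintype κ] [Fintype l] {M : Matrix m n R} (L : m → Matrix κ l R)
    (T : n → Matrix l κ R) (hM : ∀ x z, M x z = (L x * T z).trace) :
    M.rank ≤ Fintype.card κ * Fintype.card l := by
  let P : Matrix m (κ × l) R := fun x b => L x b.1 b.2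
  let Q : Matrix (κ × l) n R := fun b z => T z b.2 b.1
  have hfactor : M = P * Q := by
    ext x z
    rw [hM, mul_apply, Fintype.sum_prod_type]
    rfl
  calc M.rank ≤ P.rank := hfactor ▸ rank_mul_le_left P Q
    _ ≤ Fintype.card (κ × l) := rank_le_card_width P
    _ = Fintype.card κ * Fintype.card l := Fintype.card_prod κ l

variable [Fintype κ] [DecidableEq κ]

/-- The amplitudes `tr (A⁽¹⁾[x₁] ⋯ A⁽ᴺ⁾[x_N])` of a matrix-product state with periodic boundary
conditions; `α` indexes the local basis and `κ` the bonds. -/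
def mpsAmplitude {N : ℕ} (A : Fin N → α → Matrix κ κ R) (x : Fin N → α) : R :=
  (List.ofFn fun k => A k (x k)).prod.trace

lemma unfolding_mpsAmplitude {n m : ℕ} (A : Fin (n + m) → α → Matrix κ κ R)
    (x : {i // i ∈ Finset.univ.filter fun i : Fin (n + m) => (i : ℕ) < n} → α)
    (z : {i // i ∉ Finset.univ.filter fun i : Fin (n + m) => (i : ℕ) < n} → α) :
    unfolding (Finset.univ.filter fun i : Fin (n + m) => (i : ℕ) < n) (mpsAmplitude A) x z =
      ((List.ofFn fun k : Fin n => A (k.castAdd m) (x ⟨k.castAdd m, by simp⟩)).prod *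
        (List.ofFn fun k : Fin m => A (k.natAdd n) (z ⟨k.natAdd n, by simp⟩)).prod).trace := by
  rw [unfolding, mpsAmplitude, List.ofFn_add, List.prod_append]
  congr! 6 with k k
  · exact glue_of_mem _ _
  · exact glue_of_notMem _ _

lemma rank_unfolding_mpsAmplitude_le [StrongRankCondition R] [Fintype α] {n N : ℕ} (hn : n ≤ N)
    (A : Fin N → α → Matrix κ κ R) :
    (unfolding (Finset.univ.filter fun i : Fin N => (i : ℕ) < n) (mpsAmplitude A)).rank ≤
      Fintype.card κ ^ 2 := by
  obtain ⟨m, rfl⟩ := Nat.exists_eq_add_of_le hn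
  rw [sq]
  exact rank_le_of_eq_trace_mul _ _ (unfolding_mpsAmplitude A)

end MatrixProduct

/-- **Area law for matrix-product states.** For an MPS with periodic boundary conditions,
amplitudes `ψ(i₁,…,i_N) = tr[A^{(1)}[i₁] ⋯ A^{(N)}[i_N]]` with `D×D` matrices, and
normalized density matrix `ρ = ψψ†/‖ψ‖²`, the reduced state on any block `{0,…,n−1}` has
rank at most `D²` and entanglement entropy at most `2·log₂ D`. -/
theorem mps_area_law (d D N : ℕ) (hd : 1 ≤ d) (hD : 1 ≤ D) (hN : 1 ≤ N)
    (A : Fin N → Fin d → Matrix (Fin D) (Fin D) ℂ)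
    (ψ : (Fin N → Fin d) → ℂ)
    (hψ : ∀ x, ψ x = ((List.ofFn fun k => A k (x k)).prod).trace)
    (hne : ψ ≠ 0)
    (ρ : Matrix (Fin N → Fin d) (Fin N → Fin d) ℂ)
    (hρ : ∀ x y, ρ x y =
      (((∑ z, ‖ψ z‖ ^ 2 : ℝ) : ℂ))⁻¹ * (ψ x * starRingEnd ℂ (ψ y)))
    (n : ℕ) (hn1 : 1 ≤ n) (hnN : n ≤ N) :
    (reduced (Finset.univ.filter fun i : Fin N => (i : ℕ) < n) ρ).rank ≤ D ^ 2 ∧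
    vNEntropy (reduced (Finset.univ.filter fun i : Fin N => (i : ℕ) < n) ρ) ≤
      2 * Real.logb 2 D := by
  obtain rfl : ψ = mpsAmplitude A := funext hψ
  obtain rfl : ρ = pureState (mpsAmplitude A) := Matrix.ext hρ
  set I := Finset.univ.filter fun i : Fin N => (i : ℕ) < n
  have hpos := posSemidef_reduced I (posSemidef_pureState (mpsAmplitude A))
  have htrace : (reduced I (pureState (mpsAmplitude A))).trace = 1 :=
    (trace_reduced I _).trans (trace_pureState hne)
  have hrank : (reduced I (pureState (mpsAmplitude A))).rank ≤ D ^ 2 :=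
    calc (reduced I (pureState (mpsAmplitude A))).rank
        ≤ (unfolding I (mpsAmplitude A)).rank := rank_reduced_pureState_le I _
      _ ≤ Fintype.card (Fin D) ^ 2 := rank_unfolding_mpsAmplitude_le hnN A
      _ = D ^ 2 := by rw [Fintype.card_fin]
  refine ⟨hrank, ?_⟩
  calc vNEntropy (reduced I (pureState (mpsAmplitude A)))
      ≤ Real.logb 2 (D ^ 2 : ℕ) := vNEntropy_le_logb_of_rank_le hpos htrace hrank
    _ = 2 * Real.logb 2 D := by rw [Nat.cast_pow, Real.logb_pow, Nat.cast_ofNat]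
end
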